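/- arXiv:1301.6419 — 2 statements merged into one kernel-verified Lean document; each statement's English description precedes it below -/
import Mathlib

section
/- Let G be a branch group acting on a rooted tree T and let K be a non-trivial normal subgroup of G. Then K contains the derived subgroup rist_G(n)' of rist_G(n) for some integer n ≥ 0. -/
/-!  Common definitions: rooted trees of type `(m n)`, tree automorphisms,
rigid stabilizers, branch groups, and auxiliary notions. -/

universe u

/-- Vertices of the rooted tree of type `m`: finite sequences `(x_0, …, x_{n-1})`
with `x_i ∈ {1, …, m i}` (encoded as `Fin (m i)`). -/
def Vertex (m : ℕ → ℕ) : Type := Σ n : ℕ, ∀ i : Fin n, Fin (m i)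

namespace Vertex

variable {m : ℕ → ℕ}

/-- The level of a vertex: its length. -/
def level (v : Vertex m) : ℕ := v.1

/-- `v` is a (weak) prefix of `w`; i.e. `w` lies in the subtree `T_v`
(`w = v` or `w` is a descendant of `v`). -/
def IsPrefix (v w : Vertex m) : Prop :=
  ∃ h : v.1 ≤ w.1, ∀ i : Fin v.1, w.2 (Fin.castLE h i) = v.2 i

/-- `w` is a child (one-step extension) of `v`. -/
def IsChild (v w : Vertex m) : Prop := w.1 = v.1 + 1 ∧ IsPrefix v w

end Vertex

/-- The `n`-th layer `L_n` of the tree: all vertices of level `n`. -/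
def layer (m : ℕ → ℕ) (n : ℕ) : Set (Vertex m) := {v | v.1 = n}

section Rist

variable {m : ℕ → ℕ} (G : Type*) [Group G] [MulAction G (Vertex m)]

/-- The rigid stabilizer of a vertex `v`: all elements fixing every vertex
outside the subtree `T_v`. -/
def rist (v : Vertex m) : Subgroup G :=
  ⨅ w ∈ {w : Vertex m | ¬ Vertex.IsPrefix v w}, MulAction.stabilizer G w

/-- The subgroup generated by the rigid stabilizers of the vertices in `X`. -/
def ristSet (X : Set (Vertex m)) : Subgroup G := ⨆ v ∈ X, rist G v

/-- `rist_G(n)`, the rigid stabilizer of the `n`-th layer. -/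
def ristLayer (m : ℕ → ℕ) (G : Type*) [Group G] [MulAction G (Vertex m)] (n : ℕ) :
    Subgroup G :=
  ristSet G (layer m n)

/-- The orbit of the vertex `v` under a subgroup `H ≤ G`. -/
def subOrbit (H : Subgroup G) (v : Vertex m) : Set (Vertex m) :=
  {w | ∃ h ∈ H, h • v = w}

/-- The set of orbits of a subgroup `H ≤ G` on a set `X` of vertices. -/
def orbitsOn (H : Subgroup G) (X : Set (Vertex m)) : Set (Set (Vertex m)) :=
  (fun v => subOrbit G H v) '' X

end Rist

/-- `G` is a branch group on the rooted tree of type `m` (with respect to the given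
action): the action is faithful and by tree automorphisms, `G` acts transitively on
each layer, and each `rist_G(n)` has finite index in `G`. -/
structure IsBranchGroup (m : ℕ → ℕ) (G : Type*) [Group G] [MulAction G (Vertex m)] :
    Prop where
  faithful : ∀ g : G, (∀ v : Vertex m, g • v = v) → g = 1
  aut : ∀ (g : G) (v w : Vertex m), Vertex.IsChild v w ↔ Vertex.IsChild (g • v) (g • w)
  trans : ∀ v w : Vertex m, v.1 = w.1 → ∃ g : G, g • v = w
  ristFiniteIndex : ∀ n : ℕ, (ristLayer m G n).FiniteIndex

/-- A group is virtually soluble if it has a soluble subgroup of finite index. -/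
def VirtuallySolvable (Γ : Type*) [Group Γ] : Prop :=
  ∃ S : Subgroup Γ, S.FiniteIndex ∧ IsSolvable ↥S

/-- A group is virtually abelian if it has an abelian subgroup of finite index. -/
def VirtuallyAbelian (Γ : Type*) [Group Γ] : Prop :=
  ∃ S : Subgroup Γ, S.FiniteIndex ∧ ∀ a ∈ S, ∀ b ∈ S, a * b = b * a

/-- For subgroups `A ≤ B` of a group with `A` normalised by `B`, this says that the
factor `B/A` belongs to the class `𝔛`. -/
def FactorIn (𝔛 : (Γ : Type u) → [inst : Group Γ] → Prop) {G : Type u} [Group G]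
    (A B : Subgroup G) : Prop :=
  ∃ hn : (A.subgroupOf B).Normal, letI := hn; 𝔛 (↥B ⧸ A.subgroupOf B)

/-- The factor `B/A` is virtually soluble. -/
def FactorVirtuallySolvable {G : Type*} [Group G] (A B : Subgroup G) : Prop :=
  ∃ hn : (A.subgroupOf B).Normal,
    letI := hn; VirtuallySolvable (↥B ⧸ A.subgroupOf B)

/-- The factor `B/A` is virtually abelian. -/
def FactorVirtuallyAbelian {G : Type*} [Group G] (A B : Subgroup G) : Prop :=
  ∃ hn : (A.subgroupOf B).Normal,
    letI := hn; VirtuallyAbelian (↥B ⧸ A.subgroupOf B)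

/-- `Γ` has `r` infinite normal subgroups that generate their direct product in `Γ`:
each of them intersects trivially the subgroup generated by the others. -/
def HasIndepFamily (Γ : Type*) [Group Γ] (r : ℕ) : Prop :=
  ∃ N : Fin r → Subgroup Γ, (∀ i, (N i).Normal) ∧ (∀ i, Infinite ↥(N i)) ∧
    ∀ i, N i ⊓ (⨆ j ∈ ({i}ᶜ : Set (Fin r)), N j) = ⊥

/-! If `k ∈ K` moves a vertex `v` of level `n`, then the subtrees at `v` and `k • v` are disjoint,
so `rist_G(v)` commutes with its conjugate by `k`. Modulo `K` conjugation by `k` is trivial, hence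
`rist_G(v)` is abelian modulo `K`. By transitivity and normality the same holds at every vertex of
level `n`, while rigid stabilizers of distinct vertices of level `n` commute anyway. -/

open scoped Pointwise

section NormalSubgroup

variable {G : Type*} [Group G] {N : Subgroup G} [N.Normal]

lemma commutator_le_iff_commutator_map_mk'_eq_bot {H L : Subgroup G} :
    ⁅H, L⁆ ≤ N ↔ ⁅H.map (QuotientGroup.mk' N), L.map (QuotientGroup.mk' N)⁆ = ⊥ := by
  rw [← Subgroup.map_commutator, Subgroup.map_eq_bot_iff, QuotientGroup.ker_mk']

lemma commutator_iSup_left_le_iff {ι : Sort*} {H : ι → Subgroup G} {L : Subgroup G} :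
    ⁅⨆ i, H i, L⁆ ≤ N ↔ ∀ i, ⁅H i, L⁆ ≤ N := by
  simp only [commutator_le_iff_commutator_map_mk'_eq_bot, Subgroup.map_iSup,
    Subgroup.commutator_eq_bot_iff_le_centralizer, iSup_le_iff]

lemma commutator_iSup_iSup_le_iff {ι κ : Sort*} {H : ι → Subgroup G} {L : κ → Subgroup G} :
    ⁅⨆ i, H i, ⨆ j, L j⁆ ≤ N ↔ ∀ i j, ⁅H i, L j⁆ ≤ N := by
  rw [commutator_iSup_left_le_iff]
  refine forall_congr' fun i => ?_
  simp only [Subgroup.commutator_comm (H i), commutator_iSup_left_le_iff]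

lemma map_mk'_map_conj_of_mem {g : G} (hg : g ∈ N) (H : Subgroup G) :
    (H.map (MulAut.conj g).toMonoidHom).map (QuotientGroup.mk' N) =
      H.map (QuotientGroup.mk' N) := by
  have hg_one : (g : G ⧸ N) = 1 := (QuotientGroup.eq_one_iff g).2 hg
  have hcomp : (QuotientGroup.mk' N).comp (MulAut.conj g).toMonoidHom = QuotientGroup.mk' N := by
    ext x
    simp [hg_one]
  rw [Subgroup.map_map, hcomp]

lemma commutator_map_conj_left_le_iff {g : G} (hg : g ∈ N) {H L : Subgroup G} :
    ⁅H.map (MulAut.conj g).toMonoidHom, L⁆ ≤ N ↔ ⁅H, L⁆ ≤ N := by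
  simp only [commutator_le_iff_commutator_map_mk'_eq_bot, map_mk'_map_conj_of_mem hg]

end NormalSubgroup

section FixingSubgroup

variable {G α : Type*} [Group G] [MulAction G α] [FaithfulSMul G α]

lemma commutator_fixingSubgroup_compl_eq_bot {s t : Set α} (hst : Disjoint s t) :
    ⁅fixingSubgroup G sᶜ, fixingSubgroup G tᶜ⁆ = ⊥ := by
  refine eq_bot_iff.2 (Subgroup.commutator_le.2 fun a ha b hb => ?_)
  rw [mem_fixingSubgroup_iff] at ha hb
  have hperm : (MulAction.toPermHom G α a).Disjoint (MulAction.toPermHom G α b) := fun x =>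
    (em (x ∈ s)).symm.imp (ha x) fun hx => hb x (hst.notMem_of_mem_left hx)
  exact commutatorElement_eq_one_iff_commute.2 (hperm.commute.of_map MulAction.toPerm_injective)

lemma commutator_fixingSubgroup_compl_le_of_disjoint_smul {N : Subgroup G} [N.Normal] {g : G}
    (hg : g ∈ N) {s : Set α} (hs : Disjoint (g • s) s) :
    ⁅fixingSubgroup G sᶜ, fixingSubgroup G sᶜ⁆ ≤ N := by
  rw [← commutator_map_conj_left_le_iff hg,
    SubMulAction.fixingSubgroup_map_conj_eq (Set.smul_set_compl (a := g) (s := s)),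
    commutator_fixingSubgroup_compl_eq_bot hs]
  exact bot_le

end FixingSubgroup

namespace Vertex

variable {m : ℕ → ℕ} {u v w : Vertex m}

lemma IsPrefix.refl (v : Vertex m) : v.IsPrefix v :=
  ⟨le_rfl, fun _ => rfl⟩

lemma IsPrefix.trans (huv : u.IsPrefix v) (hvw : v.IsPrefix w) : u.IsPrefix w :=
  ⟨huv.1.trans hvw.1, fun i => (hvw.2 (Fin.castLE huv.1 i)).trans (huv.2 i)⟩

lemma IsPrefix.isPrefix_of_level_le (huw : u.IsPrefix w) (hvw : v.IsPrefix w)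
    (hle : u.level ≤ v.level) : u.IsPrefix v :=
  ⟨hle, fun i => (hvw.2 (Fin.castLE hle i)).symm.trans (huw.2 i)⟩

lemma IsPrefix.eq_of_level_eq (huv : u.IsPrefix v) (hlevel : u.level = v.level) : u = v := by
  obtain ⟨n, x⟩ := u
  obtain ⟨k, y⟩ := v
  obtain rfl : n = k := hlevel
  exact congrArg (Sigma.mk n) (funext fun i => (huv.2 i).symm)

lemma exists_isChild {n : ℕ} (hw : w.level = n + 1) : ∃ u : Vertex m, u.IsChild w := by
  obtain ⟨k, x⟩ := w
  obtain rfl : k = n + 1 := hw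
  exact ⟨⟨n, fun i => x i.castSucc⟩, rfl, n.le_succ, fun _ => rfl⟩

lemma IsPrefix.reflTransGen_isChild (hvw : v.IsPrefix w) : Relation.ReflTransGen IsChild v w := by
  obtain ⟨d, hd⟩ : ∃ d, w.level = v.level + d := Nat.exists_eq_add_of_le hvw.1
  induction d generalizing w with
  | zero => rw [hvw.eq_of_level_eq hd.symm]
  | succ d ih =>
    obtain ⟨u, hu⟩ := exists_isChild hd
    have hu_level : u.level = v.level + d := Nat.succ_injective (hu.1.symm.trans hd)
    have hvu : v.IsPrefix u := hvw.isPrefix_of_level_le hu.2 (hu_level ▸ Nat.le_add_right _ d)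
    exact (ih hvu hu_level).tail hu

lemma isPrefix_iff_reflTransGen_isChild :
    v.IsPrefix w ↔ Relation.ReflTransGen IsChild v w := by
  refine ⟨IsPrefix.reflTransGen_isChild, fun h => ?_⟩
  induction h with
  | refl => exact .refl v
  | tail _ hchild ih => exact ih.trans hchild.2

/-- The vertex set of the subtree `T_v`. -/
def subtree (v : Vertex m) : Set (Vertex m) := {w | v.IsPrefix w}

@[simp]
lemma mem_subtree : w ∈ v.subtree ↔ v.IsPrefix w :=
  Iff.rfl

lemma disjoint_subtree (hlevel : u.level = v.level) (hne : u ≠ v) :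
    Disjoint u.subtree v.subtree :=
  Set.disjoint_left.2 fun _ hu hv =>
    hne ((IsPrefix.isPrefix_of_level_le hu hv hlevel.le).eq_of_level_eq hlevel)

end Vertex

/-- `G` acts on the rooted tree of type `m` by tree automorphisms, that is, the action preserves
the child relation. -/
def ActsByTreeAutomorphisms (m : ℕ → ℕ) (G : Type*) [Group G] [MulAction G (Vertex m)] : Prop :=
  ∀ (g : G) (v w : Vertex m), Vertex.IsChild v w ↔ Vertex.IsChild (g • v) (g • w)

namespace ActsByTreeAutomorphisms

variable {m : ℕ → ℕ} {G : Type*} [Group G] [MulAction G (Vertex m)]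

lemma level_le_level_smul (hG : ActsByTreeAutomorphisms m G) (g : G) (v : Vertex m) :
    v.level ≤ (g • v).level := by
  induction hn : v.level generalizing v with
  | zero => exact Nat.zero_le _
  | succ n ih =>
    obtain ⟨u, hu⟩ := Vertex.exists_isChild hn
    have hu_level : u.level = n := Nat.succ_injective (hu.1.symm.trans hn)
    exact (Nat.succ_le_succ (ih u hu_level)).trans_eq ((hG g u v).1 hu).1.symm

lemma level_smul (hG : ActsByTreeAutomorphisms m G) (g : G) (v : Vertex m) :
    (g • v).level = v.level := by
  refine le_antisymm ?_ (hG.level_le_level_smul g v)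
  simpa only [inv_smul_smul] using hG.level_le_level_smul g⁻¹ (g • v)

lemma isPrefix_smul (hG : ActsByTreeAutomorphisms m G) (g : G) {v w : Vertex m}
    (hvw : v.IsPrefix w) : (g • v).IsPrefix (g • w) := by
  rw [Vertex.isPrefix_iff_reflTransGen_isChild] at hvw ⊢
  exact hvw.lift (g • ·) fun u w => (hG g u w).1

lemma smul_subtree (hG : ActsByTreeAutomorphisms m G) (g : G) (v : Vertex m) :
    g • v.subtree = (g • v).subtree := by
  ext w
  rw [Set.mem_smul_set_iff_inv_smul_mem, Vertex.mem_subtree, Vertex.mem_subtree]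
  constructor <;> intro hw
  · simpa only [smul_inv_smul] using hG.isPrefix_smul g hw
  · simpa only [inv_smul_smul] using hG.isPrefix_smul g⁻¹ hw

end ActsByTreeAutomorphisms

section RigidStabilizer

variable {m : ℕ → ℕ} {G : Type*} [Group G] [MulAction G (Vertex m)]

lemma rist_eq_fixingSubgroup_compl_subtree (v : Vertex m) :
    rist G v = fixingSubgroup G v.subtreeᶜ := by
  ext a
  simp only [rist, Subgroup.mem_iInf, mem_fixingSubgroup_iff, MulAction.mem_stabilizer_iff,
    Set.mem_ofPred_eq, Set.mem_compl_iff, Vertex.mem_subtree]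

lemma commutator_ristLayer_le_iff {N : Subgroup G} [N.Normal] {n : ℕ} :
    ⁅ristLayer m G n, ristLayer m G n⁆ ≤ N ↔
      ∀ u ∈ layer m n, ∀ v ∈ layer m n, ⁅rist G u, rist G v⁆ ≤ N := by
  simp only [ristLayer, ristSet, iSup_subtype', commutator_iSup_iSup_le_iff, Subtype.forall]

variable [FaithfulSMul G (Vertex m)]

lemma commutator_rist_eq_bot {u v : Vertex m} (hlevel : u.level = v.level) (hne : u ≠ v) :
    ⁅rist G u, rist G v⁆ = ⊥ := by
  simpa only [rist_eq_fixingSubgroup_compl_subtree] using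
    commutator_fixingSubgroup_compl_eq_bot (Vertex.disjoint_subtree hlevel hne)

lemma commutator_rist_self_le_of_smul_ne (hG : ActsByTreeAutomorphisms m G) {N : Subgroup G}
    [N.Normal] {g : G} (hg : g ∈ N) {v : Vertex m} (hgv : g • v ≠ v) :
    ⁅rist G v, rist G v⁆ ≤ N := by
  have hdisj : Disjoint (g • v.subtree) v.subtree := by
    rw [hG.smul_subtree]
    exact Vertex.disjoint_subtree (hG.level_smul g v) hgv
  rw [rist_eq_fixingSubgroup_compl_subtree]
  exact commutator_fixingSubgroup_compl_le_of_disjoint_smul hg hdisj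

theorem normal_subgroup_contains_rist_derived_general (hG : ActsByTreeAutomorphisms m G)
    (htrans : ∀ v w : Vertex m, v.level = w.level → ∃ g : G, g • v = w)
    (K : Subgroup G) [K.Normal] (hK : K ≠ ⊥) :
    ∃ n : ℕ, ⁅ristLayer m G n, ristLayer m G n⁆ ≤ K := by
  obtain ⟨k, hkK, hk⟩ := K.bot_or_exists_ne_one.resolve_left hK
  obtain ⟨v, hkv⟩ : ∃ v : Vertex m, k • v ≠ v := by
    by_contra! hfix
    exact hk (faithfulSMul_iff.1 ‹FaithfulSMul G (Vertex m)› k hfix)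
  refine ⟨v.level, commutator_ristLayer_le_iff.2 fun u hu w hw => ?_⟩
  obtain rfl | huw := eq_or_ne u w
  · obtain ⟨g, rfl⟩ := htrans v u hu.symm
    refine commutator_rist_self_le_of_smul_ne hG (‹K.Normal›.conj_mem k hkK g) ?_
    simpa only [mul_smul, inv_smul_smul, ne_eq, smul_left_cancel_iff] using hkv
  · exact (commutator_rist_eq_bot (hu.trans hw.symm) huw).trans_le bot_le

end RigidStabilizer

/-- **Theorem (Grigorchuk).** If `G` is a branch group acting on a rooted tree `T` and
`K` is a non-trivial normal subgroup of `G`, then `K` contains the derived subgroup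
`rist_G(n)'` for some `n ≥ 0`. -/
theorem normal_subgroup_contains_rist_derived
    (m : ℕ → ℕ) (hm : ∀ n, 2 ≤ m n)
    (G : Type*) [Group G] [MulAction G (Vertex m)] (hG : IsBranchGroup m G)
    (K : Subgroup G) [K.Normal] (hK : K ≠ ⊥) :
    ∃ n : ℕ, ⁅ristLayer m G n, ristLayer m G n⁆ ≤ K := by
  have : FaithfulSMul G (Vertex m) := faithfulSMul_iff.2 hG.faithful
  exact normal_subgroup_contains_rist_derived_general hG.aut hG.trans K hK
end

section
/- Let G be a branch group acting on a rooted tree T and let H be a subgroup of finite index in G. Then for every n the number of H-orbits on the layer L_n is at most the index |G:H|; if X is an H-orbit in L_n then the set of descendants of X in L_{n+1} is a union of H-orbits; and there exists n_0 such that for all n ≥ n_0 the number of H-orbits on L_n equals the number of H-orbits on L_{n_0}. -/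
/-!  Common definitions: rooted trees of type `(m n)`, tree automorphisms,
rigid stabilizers, branch groups, and auxiliary notions. -/

universe u

/-!
Deleting the last letter of a vertex commutes with tree automorphisms and maps `L_{n+1}` onto
`L_n`, so it induces a surjection from the `H`-orbits on `L_{n+1}` onto those on `L_n`: the number
of orbits is nondecreasing in `n`. Since `G` is transitive on `L_n`, the vertices `s • v`, with
`v ∈ L_n` fixed and `s` running through a right transversal of `H` in `G`, represent all `H`-orbits
on `L_n`, so this number never exceeds `|G : H|`. A bounded nondecreasing sequence of natural
numbers is eventually constant.
-/

theorem exists_forall_ge_eq_of_monotone_of_bddAbove {f : ℕ → ℕ} (hf : Monotone f)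
    (hbdd : BddAbove (Set.range f)) : ∃ n₀, ∀ n ≥ n₀, f n = f n₀ := by
  obtain ⟨n₀, hn₀⟩ := Nat.sSup_mem (Set.range_nonempty f) hbdd
  refine ⟨n₀, fun n hn => le_antisymm ?_ (hf hn)⟩
  rw [hn₀]
  exact le_csSup hbdd ⟨n, rfl⟩

namespace Vertex

variable {m : ℕ → ℕ}

/-- The vertex obtained by deleting the last letter. The root is sent to itself, so that `parent`
is a total map and commutes with all tree automorphisms. -/
def parent (v : Vertex m) : Vertex m :=
  ⟨v.1 - 1, fun i => v.2 (Fin.castLE (Nat.sub_le _ _) i)⟩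

theorem isPrefix_parent (v : Vertex m) : IsPrefix v.parent v :=
  ⟨Nat.sub_le _ _, fun _ => rfl⟩

theorem IsPrefix.eq_of_level_eq_s3 {u v w : Vertex m} (hu : IsPrefix u w) (hv : IsPrefix v w)
    (h : u.1 = v.1) : u = v := by
  obtain ⟨k, x⟩ := u
  obtain ⟨l, y⟩ := v
  obtain rfl : k = l := h
  obtain ⟨_, hx⟩ := hu
  obtain ⟨_, hy⟩ := hv
  congr 1
  funext i
  exact (hx i).symm.trans (hy i)

theorem isChild_iff {v w : Vertex m} : IsChild v w ↔ w.1 ≠ 0 ∧ w.parent = v := by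
  constructor
  · rintro ⟨hlevel, hprefix⟩
    have hparent : w.parent.1 = v.1 := by simp only [parent]; omega
    exact ⟨by omega, (isPrefix_parent w).eq_of_level_eq_s3 hprefix hparent⟩
  · rintro ⟨hlevel, rfl⟩
    exact ⟨by simp only [parent]; omega, isPrefix_parent w⟩

theorem eq_of_level_eq_zero {v w : Vertex m} (hv : v.1 = 0) (hw : w.1 = 0) : v = w := by
  obtain ⟨_, x⟩ := v
  obtain ⟨_, y⟩ := w
  obtain rfl := hv
  obtain rfl := hw
  congr 1
  exact Subsingleton.elim x y

theorem layer_eq_empty {k n : ℕ} (hk : m k = 0) (hkn : k < n) : layer m n = ∅ := by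
  refine Set.eq_empty_of_forall_notMem ?_
  rintro v rfl
  exact (Fin.cast hk (v.2 ⟨k, hkn⟩)).elim0

theorem image_parent_layer_succ {n : ℕ} (hn : 0 < m n) :
    parent '' layer m (n + 1) = layer m n := by
  ext v
  constructor
  · rintro ⟨w, hw, rfl⟩
    exact congrArg (· - 1) (show w.1 = n + 1 from hw)
  · rintro rfl
    obtain ⟨n, x⟩ := v
    let child : Vertex m := ⟨n + 1, Fin.snoc (α := fun i => Fin (m i)) x ⟨0, hn⟩⟩
    have hchild : IsChild ⟨n, x⟩ child :=
      ⟨rfl, Nat.le_succ n, Fin.snoc_castSucc (α := fun i => Fin (m i)) _ _⟩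
    exact ⟨child, rfl, (isChild_iff.1 hchild).2⟩

theorem descendants_layer_succ_eq {n : ℕ} {X : Set (Vertex m)} (hX : X ⊆ layer m n) :
    {w ∈ layer m (n + 1) | ∃ v ∈ X, IsPrefix v w} = layer m (n + 1) ∩ parent ⁻¹' X := by
  ext w
  refine and_congr_right fun hw => ⟨?_, fun hparent => ⟨_, hparent, isPrefix_parent w⟩⟩
  rintro ⟨v, hv, hprefix⟩
  have hlevel : w.1 = v.1 + 1 := by rw [show w.1 = n + 1 from hw, show v.1 = n from hX hv]
  rwa [Set.mem_preimage, (isChild_iff.1 ⟨hlevel, hprefix⟩).2]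

end Vertex

open Vertex

/-- The action of `G` on the vertices is by automorphisms of the tree. Preserving the child
relation in one direction is enough when `G` is a group, since inverses then preserve it too. -/
def IsTreeAction (m : ℕ → ℕ) (G : Type*) [SMul G (Vertex m)] : Prop :=
  ∀ (g : G) (v w : Vertex m), IsChild v w → IsChild (g • v) (g • w)

namespace IsTreeAction

variable {m : ℕ → ℕ} {G : Type*} [Group G] [MulAction G (Vertex m)]

theorem level_smul_ne_zero (hG : IsTreeAction m G) (g : G) {v : Vertex m} (hv : v.1 ≠ 0) :
    (g • v).1 ≠ 0 :=
  (isChild_iff.1 (hG g _ _ (isChild_iff.2 ⟨hv, rfl⟩))).1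

theorem level_smul_eq_zero (hG : IsTreeAction m G) (g : G) {v : Vertex m} (hv : v.1 = 0) :
    (g • v).1 = 0 := by
  by_contra hgv
  apply hG.level_smul_ne_zero g⁻¹ hgv
  rwa [inv_smul_smul]

theorem parent_smul (hG : IsTreeAction m G) (g : G) (v : Vertex m) :
    (g • v).parent = g • v.parent := by
  by_cases hv : v.1 = 0
  · have hroot : v.parent.1 = 0 := by simp only [parent, hv]
    have hsmul_root : (g • v).parent.1 = 0 := by simp only [parent, hG.level_smul_eq_zero g hv]
    exact eq_of_level_eq_zero hsmul_root (hG.level_smul_eq_zero g hroot)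
  · exact (isChild_iff.1 (hG g _ _ (isChild_iff.2 ⟨hv, rfl⟩))).2

theorem level_smul (hG : IsTreeAction m G) (g : G) (v : Vertex m) : (g • v).1 = v.1 := by
  induction hn : v.1 generalizing v with
  | zero => exact hG.level_smul_eq_zero g hn
  | succ n ih =>
    have hchild : IsChild v.parent v := isChild_iff.2 ⟨by omega, rfl⟩
    rw [(hG g _ _ hchild).1, ih v.parent (by simp only [parent]; omega)]

theorem subOrbit_subset_layer (hG : IsTreeAction m G) (H : Subgroup G) {n : ℕ} {v : Vertex m}
    (hv : v ∈ layer m n) : subOrbit G H v ⊆ layer m n := by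
  rintro _ ⟨h, -, rfl⟩
  exact (hG.level_smul h v).trans hv

end IsTreeAction

section Orbits

variable {m m' : ℕ → ℕ} {G : Type*} [Group G] [MulAction G (Vertex m)] [MulAction G (Vertex m')]
  {H : Subgroup G} {X : Set (Vertex m)}

theorem subOrbit_eq_orbit (v : Vertex m) : subOrbit G H v = MulAction.orbit H v :=
  Set.ext fun _ => ⟨fun ⟨h, hh, heq⟩ => ⟨⟨h, hh⟩, heq⟩, fun ⟨h, heq⟩ => ⟨h, h.2, heq⟩⟩

theorem smul_mem_subOrbit {h : G} (hh : h ∈ H) {v w : Vertex m} (hw : w ∈ subOrbit G H v) :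
    h • w ∈ subOrbit G H v := by
  rw [subOrbit_eq_orbit] at hw ⊢
  exact MulAction.mem_orbit_of_mem_orbit (⟨h, hh⟩ : H) hw

theorem subOrbit_smul {h : G} (hh : h ∈ H) (v : Vertex m) :
    subOrbit G H (h • v) = subOrbit G H v := by
  simp only [subOrbit_eq_orbit]
  exact MulAction.orbit_smul (⟨h, hh⟩ : H) v

theorem orbitsOn_image {f : Vertex m → Vertex m'} (hf : ∀ h ∈ H, ∀ v, f (h • v) = h • f v) :
    orbitsOn G H (f '' X) = Set.image f '' orbitsOn G H X := by
  have hsubOrbit (v : Vertex m) : subOrbit G H (f v) = f '' subOrbit G H v := by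
    ext w
    constructor
    · rintro ⟨h, hh, rfl⟩
      exact ⟨h • v, ⟨h, hh, rfl⟩, hf h hh v⟩
    · rintro ⟨_, ⟨h, hh, rfl⟩, rfl⟩
      exact ⟨h, hh, (hf h hh v).symm⟩
  simp only [orbitsOn, Set.image_image, hsubOrbit]

theorem orbitsOn_subset_image_of_isComplement {S : Set G} (hS : Subgroup.IsComplement (H : Set G) S)
    {v : Vertex m} (hX : X ⊆ MulAction.orbit G v) :
    orbitsOn G H X ⊆ (fun s => subOrbit G H (s • v)) '' S := by
  rintro _ ⟨w, hw, rfl⟩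
  obtain ⟨g, rfl⟩ := hX hw
  obtain ⟨⟨h, s⟩, rfl⟩ := hS.surjective g
  refine ⟨s, s.2, ?_⟩
  simp only [mul_smul, subOrbit_smul h.2]

theorem finite_orbitsOn_and_card_le_index [H.FiniteIndex]
    (hX : ∀ v ∈ X, X ⊆ MulAction.orbit G v) :
    (orbitsOn G H X).Finite ∧ Nat.card (orbitsOn G H X) ≤ H.index := by
  obtain rfl | ⟨v, hv⟩ := X.eq_empty_or_nonempty
  · simp [orbitsOn]
  obtain ⟨S, hS, -⟩ := H.exists_isComplement_right 1
  have hsubset := orbitsOn_subset_image_of_isComplement hS (hX v hv)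
  have hfinite := hS.finite_right.image fun s => subOrbit G H (s • v)
  refine ⟨hfinite.subset hsubset, ?_⟩
  calc
    Nat.card (orbitsOn G H X) ≤ Nat.card ((fun s => subOrbit G H (s • v)) '' S) :=
      Nat.card_mono hfinite hsubset
    _ ≤ Nat.card S := Nat.card_image_le hS.finite_right
    _ = H.index := hS.card_right

end Orbits

namespace IsTreeAction

variable {m : ℕ → ℕ} {G : Type*} [Group G] [MulAction G (Vertex m)] {H : Subgroup G}

theorem smul_mem_descendants_layer_succ (hG : IsTreeAction m G) {n : ℕ} {X : Set (Vertex m)}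
    (hX : X ⊆ layer m n) {g : G} (hgX : ∀ v ∈ X, g • v ∈ X) {w : Vertex m}
    (hw : w ∈ {w ∈ layer m (n + 1) | ∃ v ∈ X, IsPrefix v w}) :
    g • w ∈ {w ∈ layer m (n + 1) | ∃ v ∈ X, IsPrefix v w} := by
  rw [descendants_layer_succ_eq hX] at hw ⊢
  refine ⟨(hG.level_smul g w).trans hw.1, ?_⟩
  rw [Set.mem_preimage, hG.parent_smul]
  exact hgX _ hw.2

theorem card_orbitsOn_layer_le_succ (hG : IsTreeAction m G) {n : ℕ} (hn : 0 < m n)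
    (hfinite : (orbitsOn G H (layer m (n + 1))).Finite) :
    Nat.card (orbitsOn G H (layer m n)) ≤ Nat.card (orbitsOn G H (layer m (n + 1))) := by
  rw [← image_parent_layer_succ hn, orbitsOn_image fun h _ v => hG.parent_smul h v]
  exact Nat.card_image_le hfinite

theorem exists_forall_ge_card_orbitsOn_layer_eq (hG : IsTreeAction m G)
    (hfinite : ∀ n, (orbitsOn G H (layer m n)).Finite)
    (hbdd : BddAbove (Set.range fun n => Nat.card (orbitsOn G H (layer m n)))) :
    ∃ n₀, ∀ n ≥ n₀,
      Nat.card (orbitsOn G H (layer m n)) = Nat.card (orbitsOn G H (layer m n₀)) := by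
  by_cases hm : ∃ k, m k = 0
  · obtain ⟨k, hk⟩ := hm
    refine ⟨k + 1, fun n hn => ?_⟩
    rw [layer_eq_empty hk hn, layer_eq_empty hk k.lt_succ_self]
  · have hpos (n : ℕ) : 0 < m n := Nat.pos_of_ne_zero fun h => hm ⟨n, h⟩
    exact exists_forall_ge_eq_of_monotone_of_bddAbove
      (monotone_nat_of_le_succ fun n => hG.card_orbitsOn_layer_le_succ (hpos n) (hfinite (n + 1)))
      hbdd

end IsTreeAction

theorem bounded_orbits_general (m : ℕ → ℕ) (G : Type*) [Group G] [MulAction G (Vertex m)]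
    (hG : IsTreeAction m G) (htrans : ∀ v w : Vertex m, v.1 = w.1 → ∃ g : G, g • v = w)
    (H : Subgroup G) [H.FiniteIndex] :
    (∀ n : ℕ, (orbitsOn G H (layer m n)).Finite ∧
        Nat.card (orbitsOn G H (layer m n)) ≤ H.index) ∧
    (∀ (n : ℕ) (X : Set (Vertex m)), (∃ v ∈ layer m n, X = subOrbit G H v) →
        ∀ h ∈ H, ∀ w ∈ {w ∈ layer m (n + 1) | ∃ v ∈ X, Vertex.IsPrefix v w},
          h • w ∈ {w ∈ layer m (n + 1) | ∃ v ∈ X, Vertex.IsPrefix v w}) ∧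
    (∃ n₀ : ℕ, ∀ n ≥ n₀,
        Nat.card (orbitsOn G H (layer m n)) = Nat.card (orbitsOn G H (layer m n₀))) := by
  have hbound (n : ℕ) : (orbitsOn G H (layer m n)).Finite ∧
      Nat.card (orbitsOn G H (layer m n)) ≤ H.index :=
    finite_orbitsOn_and_card_le_index fun v hv w hw => htrans v w (hv.trans hw.symm)
  refine ⟨hbound, ?_, ?_⟩
  · rintro n _ ⟨v, hv, rfl⟩ h hh w hw
    exact hG.smul_mem_descendants_layer_succ (hG.subOrbit_subset_layer H hv)
      (fun _ => smul_mem_subOrbit hh) hw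
  · refine hG.exists_forall_ge_card_orbitsOn_layer_eq (fun n => (hbound n).1) ⟨H.index, ?_⟩
    rintro _ ⟨n, rfl⟩
    exact (hbound n).2

/-- **Remark (bounded orbits).** Let `G` be a branch group on `T` and `H ≤ G` of finite
index.  Then `H` has at most `|G : H|` orbits on each layer `L_n`; the set of
descendants in `L_{n+1}` of an `H`-orbit `X ⊆ L_n` is a union of `H`-orbits; and there
is `n₀` such that for all `n ≥ n₀` the number of `H`-orbits on `L_n` equals the number
of `H`-orbits on `L_{n₀}`. -/
theorem bounded_orbits
    (m : ℕ → ℕ) (hm : ∀ n, 2 ≤ m n)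
    (G : Type*) [Group G] [MulAction G (Vertex m)] (hG : IsBranchGroup m G)
    (H : Subgroup G) [H.FiniteIndex] :
    (∀ n : ℕ, (orbitsOn G H (layer m n)).Finite ∧
        Nat.card (orbitsOn G H (layer m n)) ≤ H.index) ∧
    (∀ (n : ℕ) (X : Set (Vertex m)), (∃ v ∈ layer m n, X = subOrbit G H v) →
        ∀ h ∈ H, ∀ w ∈ {w ∈ layer m (n + 1) | ∃ v ∈ X, Vertex.IsPrefix v w},
          h • w ∈ {w ∈ layer m (n + 1) | ∃ v ∈ X, Vertex.IsPrefix v w}) ∧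
    (∃ n₀ : ℕ, ∀ n ≥ n₀,
        Nat.card (orbitsOn G H (layer m n)) = Nat.card (orbitsOn G H (layer m n₀))) :=
  bounded_orbits_general m G (fun g v w => (hG.aut g v w).1) hG.trans H
end
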